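/- arXiv:1910.03541 — 2 statements merged into one kernel-verified Lean document; each statement's English description precedes it below -/
import Mathlib

section
/- Let c = 1. If u is a global solution for c, then u(x) = |x|²/2 for every x ∈ Q̄. -/
/-!
In polar coordinates `x = exp r • (cos t, sin t)`, let `w r t = exp (-2 r) u(x) - 1/2`, so that
`w = 0` says that `u(x) = |x|²/2` at `x`. Nonnegativity of `u`, and convexity along the segments
joining the two axes, give `|w| ≤ 1/2`; and `w` vanishes at `t = 0` and `t = π/2`.

Write `v = u - |x|²/2`. Its Laplacian and its second derivative in the tangential direction are
`D = 4 w + 4 w_r + w_rr + w_tt` and `B = 2 w + w_r + w_tt`. The equation `det D²u = 1` implies that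
the two diagonal Hessian entries of `u` in the radial-tangential frame, `1 + D - B` and `1 + B`, are
positive with product at least `1`, whence `D ≥ 0` and `B² ≤ D (1 + B)`. In particular `B` is
controlled by `D`: `|B| ≤ (1 + 1/ε) D + ε` for every `ε > 0`.

Now average against `sin 2t`, the first Dirichlet eigenfunction of the interval `(0, π/2)`. With
`F r = ∫ w r t sin 2t dt`, integration by parts gives `∫ D sin 2t = F'' + 4 F'` and
`∫ B sin 2t = F' - 2 F`. So `F` is a bounded function on the line with `g = F'' + 4 F' ≥ 0` and
`|F' - 2 F| ≤ (1 + 1/ε) g + ε`, which forces `F = 0` (`ode_liouville`). Hence `∫ D sin 2t = 0`, so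
`D = 0`, so `B = 0`, and the difference `D - B = 2 w + 3 w_r + w_rr = 0` is an Euler equation in the
radial variable, whose only bounded solution on the whole line is `0` (`euler_ode_bounded`).

Since the first and second derivatives of `u` extend continuously to `closure Qset \ {0}`, all
derivatives of `w` that occur are bounded for `r` in a bounded interval; this justifies the
integration by parts and the differentiation under the integral sign.
-/

noncomputable section

open Set Metric

/-- The Euclidean plane ℝ². -/
abbrev E2 : Type := EuclideanSpace ℝ (Fin 2)

/-- First partial derivative ∂_i. -/
def pd (i : Fin 2) (f : E2 → ℝ) : E2 → ℝ := fun x => fderiv ℝ f x (EuclideanSpace.single i 1)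

/-- Second partial derivative ∂_i ∂_j. -/
def pd2 (i j : Fin 2) (f : E2 → ℝ) : E2 → ℝ := pd i (pd j f)

/-- The open first quadrant Q. -/
def Qset : Set E2 := {x | 0 < x 0 ∧ 0 < x 1}

/-- q(x) = |x|²/2. -/
def qfun (x : E2) : ℝ := ‖x‖ ^ 2 / 2

/-- The Monge–Ampère operator det D²u = u₁₁ u₂₂ − u₁₂². -/
def MA (u : E2 → ℝ) (x : E2) : ℝ := pd2 0 0 u x * pd2 1 1 u x - (pd2 0 1 u x) ^ 2

/-- P_c^+(x) = ½x₁² + ½x₂² + √(1−c) x₁x₂. -/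
def Pplus (c : ℝ) (x : E2) : ℝ := x 0 ^ 2 / 2 + x 1 ^ 2 / 2 + Real.sqrt (1 - c) * (x 0 * x 1)

/-- P_c^-(x) = ½x₁² + ½x₂² − √(1−c) x₁x₂. -/
def Pminus (c : ℝ) (x : E2) : ℝ := x 0 ^ 2 / 2 + x 1 ^ 2 / 2 - Real.sqrt (1 - c) * (x 0 * x 1)

/-- β_c^- = π / arccos(−√(1−c)). -/
def betam (c : ℝ) : ℝ := Real.pi / Real.arccos (-(Real.sqrt (1 - c)))

/-- A global solution (without the sign condition u ≥ 0): u is continuous and convex on Q̄,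
smooth in Q, its first and second partial derivatives extend continuously to Q̄ \ {0},
det D²u = c in Q, and u = q on ∂Q. -/
structure IsGlobalSolutionNS (c : ℝ) (u : E2 → ℝ) : Prop where
  cont : ContinuousOn u (closure Qset)
  conv : ConvexOn ℝ (closure Qset) u
  smooth : ContDiffOn ℝ (⊤ : ℕ∞) u Qset
  ext1 : ∀ i : Fin 2, ∃ g : E2 → ℝ, ContinuousOn g (closure Qset \ {0}) ∧ ∀ x ∈ Qset, g x = pd i u x
  ext2 : ∀ i j : Fin 2, ∃ g : E2 → ℝ, ContinuousOn g (closure Qset \ {0}) ∧ ∀ x ∈ Qset, g x = pd2 i j u x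
  ma : ∀ x ∈ Qset, MA u x = c
  bdry : ∀ x ∈ frontier Qset, u x = qfun x

/-- A global solution: additionally u ≥ 0 on Q̄. -/
structure IsGlobalSolution (c : ℝ) (u : E2 → ℝ) extends IsGlobalSolutionNS c u : Prop where
  nonneg : ∀ x ∈ closure Qset, 0 ≤ u x

/-! ### Bounded solutions of ordinary differential inequalities -/

theorem growth_of_deriv_ge {F F' : ℝ → ℝ} {a b k : ℝ} (hab : a ≤ b)
    (hF : ∀ x ∈ Icc a b, HasDerivAt F (F' x) x) (hk : ∀ x ∈ Icc a b, k ≤ F' x) :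
    k * (b - a) ≤ F b - F a := by
  apply Convex.mul_sub_le_image_sub_of_le_deriv (convex_Icc a b)
    (fun x hx => (hF x hx).continuousAt.continuousWithinAt)
    (fun x hx => (hF x (interior_subset hx)).differentiableAt.differentiableWithinAt)
    (fun x hx => by
      rw [(hF x (interior_subset hx)).deriv]
      exact hk x (interior_subset hx)) a (left_mem_Icc.2 hab) b (right_mem_Icc.2 hab) hab

/-- A bounded `F` on the line with `F'' + 4 F' ≥ 0` and `|F' - 2 F| ≤ C_ε (F'' + 4 F') + ε` for all
`ε > 0` vanishes. Indeed `F` is nondecreasing, because `exp (4 x) F'` is; if `F x₀ > 0`, integrating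
the second inequality to the right of `x₀` makes `F` grow linearly, and if `F x₀ < 0`, integrating it
to the left makes `C (F' + 4 F)` decrease linearly to `-∞`. -/
theorem ode_liouville {F F1 F2 : ℝ → ℝ} {M : ℝ}
    (hF : ∀ x, HasDerivAt F (F1 x) x) (hF1 : ∀ x, HasDerivAt F1 (F2 x) x)
    (hM : ∀ x, |F x| ≤ M) (hg : ∀ x, 0 ≤ F2 x + 4 * F1 x)
    (hε : ∀ ε > 0, ∃ C ≥ 0, ∀ x, |F1 x - 2 * F x| ≤ C * (F2 x + 4 * F1 x) + ε) :
    ∀ x, F x = 0 := by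
  have hM1 : ∀ x, F x ≤ M := fun x => (abs_le.1 (hM x)).2
  have hM2 : ∀ x, -M ≤ F x := fun x => (abs_le.1 (hM x)).1
  have hM0 : 0 ≤ M := (abs_nonneg _).trans (hM 0)
  -- `exp (4 x) * F1 x` is nondecreasing, so a negative value of `F1` makes `F` unbounded at `-∞`.
  have hmono1 : Monotone fun x => Real.exp (4 * x) * F1 x := by
    have hd : ∀ x, HasDerivAt (fun x => Real.exp (4 * x) * F1 x)
        (Real.exp (4 * x) * (F2 x + 4 * F1 x)) x := by
      intro x
      have h4 : HasDerivAt (fun x : ℝ => 4 * x) 4 x := by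
        simpa using (hasDerivAt_id x).const_mul (4 : ℝ)
      exact (h4.exp.mul (hF1 x)).congr_deriv (by ring)
    exact monotone_of_hasDerivAt_nonneg hd
      (fun x => mul_nonneg (Real.exp_pos _).le (hg x))
  have hF1nn : ∀ x, 0 ≤ F1 x := by
    intro x0
    by_contra! hneg
    have hle : ∀ x ≤ x0, F1 x ≤ F1 x0 := by
      intro x hx
      have h1 := hmono1 hx
      have h2 : Real.exp (4 * x) ≤ Real.exp (4 * x0) := Real.exp_le_exp.2 (by linarith)
      have h3 := Real.exp_pos (4 * x)
      simp only at h1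
      have h4 : Real.exp (4 * x) * F1 x ≤ Real.exp (4 * x) * F1 x0 :=
        h1.trans (mul_le_mul_of_nonpos_right h2 hneg.le)
      exact le_of_mul_le_mul_left h4 h3
    set T := (2 * M + 1) / (-F1 x0) with hT
    have hTpos : 0 ≤ T := div_nonneg (by linarith) (by linarith)
    have h := growth_of_deriv_ge (F := fun x => -F x) (F' := fun x => -F1 x) (a := x0 - T) (b := x0)
      (k := -F1 x0) (by linarith) (fun x _ => (hF x).neg)
      (fun x hx => by have := hle x hx.2; linarith)
    have hTk : (-F1 x0) * T = 2 * M + 1 := by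
      rw [hT, mul_div_cancel₀ _ (by linarith)]
    have h' : (-F1 x0) * (x0 - (x0 - T)) = 2 * M + 1 := by rw [← hTk]; ring
    rw [h'] at h
    have := hM1 (x0 - T); have := hM2 x0
    linarith
  have hmono : Monotone F := monotone_of_hasDerivAt_nonneg hF hF1nn
  intro x0
  apply le_antisymm
  · by_contra! hL
    obtain ⟨C, hC, hb⟩ := hε (F x0) hL
    have hd : ∀ x, HasDerivAt (fun x => F x + C * (F1 x + 4 * F x))
        (F1 x + C * (F2 x + 4 * F1 x)) x := fun x =>
      (hF x).add (((hF1 x).add ((hF x).const_mul 4)).const_mul C)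
    have hlow : ∀ x ≥ x0, F x0 ≤ F1 x + C * (F2 x + 4 * F1 x) := by
      intro x hx
      have := (abs_le.1 (hb x)).1
      have := hmono hx
      linarith
    have hgr : ∀ x ≥ x0, F x0 * (x - x0) - (2 + 8 * C) * M ≤ C * F1 x := by
      intro x hx
      have h := growth_of_deriv_ge hx (fun y _ => hd y) (fun y hy => hlow y hy.1)
      have h1 := hM1 x
      have h2 := hM2 x0
      have h3 : 0 ≤ C * (M - F x) := mul_nonneg hC (by linarith)
      have h4 : 0 ≤ C * (F x0 + M) := mul_nonneg hC (by linarith)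
      have h5 : 0 ≤ C * F1 x0 := mul_nonneg hC (hF1nn _)
      nlinarith
    set x1 := x0 + ((2 + 8 * C) * M + 1) / F x0 with hx1
    have hx01 : x0 ≤ x1 := by
      rw [hx1]
      have : 0 ≤ ((2 + 8 * C) * M + 1) / F x0 := by positivity
      linarith
    have hbig : ∀ x ≥ x1, 1 ≤ C * F1 x := by
      intro x hx
      have h := hgr x (hx01.trans hx)
      have h1 : F x0 * (x1 - x0) = (2 + 8 * C) * M + 1 := by rw [hx1]; field_simp; ring
      have h2 : F x0 * (x1 - x0) ≤ F x0 * (x - x0) :=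
        mul_le_mul_of_nonneg_left (by linarith) hL.le
      linarith
    have hCM : 0 ≤ C * M := mul_nonneg hC hM0
    have h := growth_of_deriv_ge (F := fun x => C * F x) (a := x1) (b := x1 + (2 * (C * M) + 1))
      (k := 1) (by linarith) (fun y _ => (hF y).const_mul C) (fun y hy => hbig y hy.1)
    have h1 : C * F (x1 + (2 * (C * M) + 1)) ≤ C * M := mul_le_mul_of_nonneg_left (hM1 _) hC
    have h2 : C * -M ≤ C * F x1 := mul_le_mul_of_nonneg_left (hM2 _) hC
    linarith
  · by_contra! hL
    obtain ⟨C, hC, hb⟩ := hε (-F x0) (by linarith)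
    have hlow : ∀ x ≤ x0, -F x0 ≤ C * (F2 x + 4 * F1 x) := by
      intro x hx
      have := (abs_le.1 (hb x)).2
      have := hmono hx
      have := hF1nn x
      linarith
    have hd : ∀ x, HasDerivAt (fun x => C * (F1 x + 4 * F x)) (C * (F2 x + 4 * F1 x)) x :=
      fun x => ((hF1 x).add ((hF x).const_mul 4)).const_mul C
    set K := C * (F1 x0 + 4 * F x0) + 4 * (C * M) with hK
    have hKnn : 0 ≤ K := by
      have h1 : C * -M ≤ C * F x0 := mul_le_mul_of_nonneg_left (hM2 _) hC
      have := mul_nonneg hC (hF1nn x0)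
      rw [hK]; linarith
    have hTpos : 0 ≤ (K + 1) / (-F x0) := div_nonneg (by linarith) (by linarith)
    have h := growth_of_deriv_ge (a := x0 - (K + 1) / (-F x0)) (b := x0)
      (by linarith) (fun y _ => hd y) (fun y hy => hlow y hy.2)
    have h1 : -F x0 * (x0 - (x0 - (K + 1) / (-F x0))) = K + 1 := by
      have : -F x0 ≠ 0 := by linarith
      rw [sub_sub_cancel, mul_div_cancel₀ _ this]
    rw [h1] at h
    have h2 := mul_nonneg hC (hF1nn (x0 - (K + 1) / (-F x0)))
    have h3 : C * -M ≤ C * F (x0 - (K + 1) / (-F x0)) := mul_le_mul_of_nonneg_left (hM2 _) hC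
    linarith

/-- Bounded solutions on the line of `w'' + 3 w' + 2 w = 0`, an equation with characteristic
exponents `-1` and `-2`, vanish. -/
theorem euler_ode_bounded {w w1 w2 : ℝ → ℝ} {M : ℝ}
    (h1 : ∀ x, HasDerivAt w (w1 x) x) (h2 : ∀ x, HasDerivAt w1 (w2 x) x)
    (hM : ∀ x, |w x| ≤ M) (hode : ∀ x, w2 x + 3 * w1 x + 2 * w x = 0) : ∀ x, w x = 0 := by
  have hconst : ∀ {f : ℝ → ℝ}, (∀ x, HasDerivAt f 0 x) → ∀ x, f x = f 0 := fun hf x =>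
    is_const_of_deriv_eq_zero (fun y => (hf y).differentiableAt) (fun y => (hf y).deriv) x 0
  have hA := hconst (f := fun x => Real.exp (2 * x) * (w1 x + w x)) (by
    intro x
    have h4 : HasDerivAt (fun x : ℝ => 2 * x) 2 x := by
      simpa using (hasDerivAt_id x).const_mul (2 : ℝ)
    refine (h4.exp.mul ((h2 x).add (h1 x))).congr_deriv ?_
    simp only [Pi.add_apply]
    linear_combination Real.exp (2 * x) * hode x)
  set A := Real.exp (2 * 0) * (w1 0 + w 0)
  have hB := hconst (f := fun x => Real.exp x * w x + A * Real.exp (-x)) (by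
    intro x
    refine (((Real.hasDerivAt_exp x).mul (h1 x)).add
      (((hasDerivAt_neg x).exp).const_mul A)).congr_deriv ?_
    have := hA x
    rw [← this]
    have h3 : Real.exp (2 * x) * Real.exp (-x) = Real.exp x := by
      rw [← Real.exp_add]; congr 1; ring
    linear_combination - (w1 x + w x) * h3)
  set B := Real.exp 0 * w 0 + A * Real.exp (-0)
  -- With `y = exp (-x)` the solution is the polynomial `B y - A y²`, bounded for `y > 0`.
  have hpoly : ∀ y > 0, w (-Real.log y) = B * y - A * y ^ 2 := by
    intro y hy
    have := hB (-Real.log y)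
    simp only [neg_neg, Real.exp_log hy, Real.exp_neg] at this
    field_simp at this
    linarith
  have hbd : ∀ y > 0, |B * y - A * y ^ 2| ≤ M := fun y hy => hpoly y hy ▸ hM _
  have hM0 : 0 ≤ M := (abs_nonneg _).trans (hM 0)
  have hBy : ∀ y > 0, |B| * y ≤ 5 * M := by
    intro y hy
    have e1 := abs_le.1 (hbd y hy)
    have e2 := abs_le.1 (hbd (2 * y) (by positivity))
    have e3 : |B| * y = |B * y| := by rw [abs_mul, abs_of_pos hy]
    rw [e3, abs_le]
    constructor <;> nlinarith
  have hB0 : B = 0 := by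
    by_contra hne
    have hp := abs_pos.2 hne
    have := hBy ((5 * M + 1) / |B|) (by positivity)
    rw [mul_div_cancel₀ _ hp.ne'] at this
    linarith
  have hA0 : A = 0 := by
    by_contra hne
    have hp := abs_pos.2 hne
    have h := hbd (1 + M / |A|) (by positivity)
    rw [hB0, zero_mul, zero_sub, abs_neg, abs_mul, abs_of_nonneg (sq_nonneg (1 + M / |A|))] at h
    have h3 : |A| * (1 + M / |A|) = |A| + M := by field_simp
    have h4 : 0 ≤ M / |A| := by positivity
    nlinarith
  intro x
  have := hpoly (Real.exp (-x)) (Real.exp_pos _)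
  rw [Real.log_exp, neg_neg] at this
  rw [this, hB0, hA0]; ring

open MeasureTheory Filter Topology

/-! ### Averaging over the angular variable -/

/-- The angular interval `(0, π/2)`. -/
abbrev angles : Set ℝ := Ioo 0 (Real.pi / 2)

theorem integrableOn_mul_sin {f : ℝ → ℝ} {C : ℝ} (hf : ContinuousOn f angles)
    (hC : ∀ t ∈ angles, |f t| ≤ C) :
    IntegrableOn (fun t => f t * Real.sin (2 * t)) angles := by
  refine Integrable.of_bound (C := C) ?_ ?_
  · exact (hf.mul (g := fun t => Real.sin (2 * t)) (by fun_prop)).aestronglyMeasurable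
      measurableSet_Ioo
  · refine (ae_restrict_mem measurableSet_Ioo).mono fun t ht => ?_
    rw [Real.norm_eq_abs, abs_mul]
    have h1 := hC t ht
    have h2 := Real.abs_sin_le_one (2 * t)
    nlinarith [abs_nonneg (f t), abs_nonneg (Real.sin (2 * t))]

theorem sin_two_mul_pos {t : ℝ} (ht : t ∈ angles) : 0 < Real.sin (2 * t) :=
  Real.sin_pos_of_pos_of_lt_pi (by linarith [ht.1]) (by linarith [ht.2])

/-- Differentiation under the integral sign. -/
theorem hasDerivAt_integral_mul_sin {f f' : ℝ → ℝ → ℝ}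
    (hf : ∀ x, ContinuousOn (f x) angles) (hf' : ∀ x, ContinuousOn (f' x) angles)
    (hd : ∀ x, ∀ t ∈ angles, HasDerivAt (fun y => f y t) (f' x t) x)
    (hb : ∀ x₀, ∃ C, ∀ x ∈ ball x₀ 1, ∀ t ∈ angles, |f x t| ≤ C)
    (hb' : ∀ x₀, ∃ C, ∀ x ∈ ball x₀ 1, ∀ t ∈ angles, |f' x t| ≤ C) (x : ℝ) :
    HasDerivAt (fun y => ∫ t in angles, f y t * Real.sin (2 * t))
      (∫ t in angles, f' x t * Real.sin (2 * t)) x := by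
  obtain ⟨C, hC⟩ := hb x
  obtain ⟨C', hC'⟩ := hb' x
  refine (hasDerivAt_integral_of_dominated_loc_of_deriv_le (μ := volume.restrict angles)
    (F := fun y t => f y t * Real.sin (2 * t)) (F' := fun y t => f' y t * Real.sin (2 * t))
    (bound := fun _ => C') (ball_mem_nhds x one_pos) ?_ ?_ ?_ ?_ ?_ ?_).2
  · exact Eventually.of_forall fun y =>
      ((hf y).mul (g := fun t => Real.sin (2 * t)) (by fun_prop)).aestronglyMeasurable
        measurableSet_Ioo
  · exact integrableOn_mul_sin (hf x) (hC x (mem_ball_self one_pos))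
  · exact ((hf' x).mul (g := fun t => Real.sin (2 * t)) (by fun_prop)).aestronglyMeasurable
      measurableSet_Ioo
  · refine (ae_restrict_mem measurableSet_Ioo).mono fun t ht y hy => ?_
    rw [Real.norm_eq_abs, abs_mul]
    have h1 := hC' y hy t ht
    have h2 := Real.abs_sin_le_one (2 * t)
    nlinarith [abs_nonneg (f' y t), abs_nonneg (Real.sin (2 * t))]
  · have hfin : volume angles ≠ ⊤ := by simp [angles]
    exact integrableOn_const hfin
  · exact (ae_restrict_mem measurableSet_Ioo).mono fun t ht y _ => (hd y t ht).mul_const _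

theorem integral_sin_two_mul : ∫ t in angles, Real.sin (2 * t) = 1 := by
  have hpi : (0 : ℝ) ≤ Real.pi / 2 := by positivity
  rw [← integral_Ioc_eq_integral_Ioo, ← intervalIntegral.integral_of_le hpi]
  rw [intervalIntegral.integral_comp_mul_left (fun t => Real.sin t) two_ne_zero]
  rw [mul_div_cancel₀ _ two_ne_zero]
  norm_num

/-- Two integrations by parts: `sin 2t` satisfies `(sin 2t)'' = -4 sin 2t` and vanishes at both ends
of the interval. The boundary terms are controlled by the limits `l0`, `l1` of `w` and by the
boundedness of `w'`. -/
theorem integral_second_deriv_mul_sin {w w' w'' : ℝ → ℝ} {C : ℝ}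
    (h1 : ∀ t ∈ angles, HasDerivAt w (w' t) t) (h2 : ∀ t ∈ angles, HasDerivAt w' (w'' t) t)
    (hc : ContinuousOn w'' angles) (hCw : ∀ t ∈ angles, |w t| ≤ C)
    (hC1 : ∀ t ∈ angles, |w' t| ≤ C) (hC2 : ∀ t ∈ angles, |w'' t| ≤ C)
    (l0 : Tendsto w (𝓝[>] 0) (𝓝 0)) (l1 : Tendsto w (𝓝[<] (Real.pi / 2)) (𝓝 0)) :
    ∫ t in angles, w'' t * Real.sin (2 * t) = -4 * ∫ t in angles, w t * Real.sin (2 * t) := by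
  have hpi : (0 : ℝ) < Real.pi / 2 := by positivity
  have hcw : ContinuousOn w angles := fun t ht => (h1 t ht).continuousAt.continuousWithinAt
  have i1 := integrableOn_mul_sin hc hC2
  have i2 := integrableOn_mul_sin hcw hCw
  have hd : ∀ t ∈ Ioo 0 (Real.pi / 2),
      HasDerivAt (fun t => w' t * Real.sin (2 * t) - 2 * (w t * Real.cos (2 * t)))
        (w'' t * Real.sin (2 * t) + 4 * (w t * Real.sin (2 * t))) t := by
    intro t ht
    have h2t : HasDerivAt (fun x : ℝ => 2 * x) 2 t := by
      simpa using (hasDerivAt_id t).const_mul (2 : ℝ)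
    exact (((h2 t ht).mul h2t.sin).sub (((h1 t ht).mul h2t.cos).const_mul 2)).congr_deriv (by ring)
  have hlim : ∀ {a : ℝ} {l : Filter ℝ}, l ≤ 𝓝 a → angles ∈ l → Real.sin (2 * a) = 0 →
      Tendsto w l (𝓝 0) →
      Tendsto (fun t => w' t * Real.sin (2 * t) - 2 * (w t * Real.cos (2 * t))) l (𝓝 0) := by
    intro a l hl hmem ha hw
    have e1 : Tendsto (fun t => w' t * Real.sin (2 * t)) l (𝓝 0) := by
      have hs : Tendsto (fun t => Real.sin (2 * t)) l (𝓝 0) := by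
        rw [← ha]
        exact (Continuous.tendsto (by fun_prop) a).mono_left hl
      refine squeeze_zero_norm' (a := fun t => C * |Real.sin (2 * t)|) ?_ ?_
      · filter_upwards [hmem] with t ht
        rw [Real.norm_eq_abs, abs_mul]
        exact mul_le_mul_of_nonneg_right (hC1 t ht) (abs_nonneg _)
      · simpa using hs.abs.const_mul C
    have e2 : Tendsto (fun t => w t * Real.cos (2 * t)) l (𝓝 (0 * Real.cos (2 * a))) :=
      hw.mul ((Continuous.tendsto (by fun_prop) a).mono_left hl)
    simpa using e1.sub (e2.const_mul 2)
  have hint : IntegrableOn (fun t => w'' t * Real.sin (2 * t) + 4 * (w t * Real.sin (2 * t)))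
      angles := i1.add (i2.const_mul 4)
  have key := intervalIntegral.integral_eq_sub_of_hasDerivAt_of_tendsto hpi hd
    ((intervalIntegrable_iff_integrableOn_Ioo_of_le hpi.le).2 hint)
    (hlim nhdsWithin_le_nhds (Ioo_mem_nhdsGT hpi) (by simp) l0)
    (hlim nhdsWithin_le_nhds (Ioo_mem_nhdsLT hpi) (by rw [mul_div_cancel₀ _ two_ne_zero]; simp) l1)
  rw [intervalIntegral.integral_of_le hpi.le, integral_Ioc_eq_integral_Ioo,
    integral_add i1 (i2.const_mul 4), integral_const_mul] at key
  linarith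

/-- The Liouville theorem in polar coordinates. The functions `w1`, `w2`, `wt`, `wtt` are `w_r`, `w_rr`,
`w_t`, `w_tt`; `hdet` and `hpos` express that the diagonal entries of the Hessian of `u` in the
radial-tangential frame have product at least `1` and are positive. -/
theorem polar_liouville {w w1 w2 wt wtt : ℝ → ℝ → ℝ} {M : ℝ}
    (h1 : ∀ x, ∀ t ∈ angles, HasDerivAt (fun y => w y t) (w1 x t) x)
    (h2 : ∀ x, ∀ t ∈ angles, HasDerivAt (fun y => w1 y t) (w2 x t) x)
    (ht : ∀ x, ∀ t ∈ angles, HasDerivAt (w x) (wt x t) t)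
    (htt : ∀ x, ∀ t ∈ angles, HasDerivAt (wt x) (wtt x t) t)
    (c1 : ∀ x, ContinuousOn (w1 x) angles) (c2 : ∀ x, ContinuousOn (w2 x) angles)
    (ctt : ∀ x, ContinuousOn (wtt x) angles)
    (hM : ∀ x, ∀ t ∈ angles, |w x t| ≤ M)
    (hb : ∀ x₀, ∃ C, ∀ x ∈ ball x₀ 1, ∀ t ∈ angles,
      |w1 x t| ≤ C ∧ |w2 x t| ≤ C ∧ |wt x t| ≤ C ∧ |wtt x t| ≤ C)
    (l0 : ∀ x, Tendsto (w x) (𝓝[>] 0) (𝓝 0))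
    (l1 : ∀ x, Tendsto (w x) (𝓝[<] (Real.pi / 2)) (𝓝 0))
    (hdet : ∀ x, ∀ t ∈ angles,
      1 ≤ (1 + (2 * w x t + 3 * w1 x t + w2 x t)) * (1 + (2 * w x t + w1 x t + wtt x t)))
    (hpos : ∀ x, ∀ t ∈ angles, 0 < 1 + (2 * w x t + w1 x t + wtt x t)) :
    ∀ x, ∀ t ∈ angles, w x t = 0 := by
  have c0 : ∀ x, ContinuousOn (w x) angles := fun x t h => (ht x t h).continuousAt.continuousWithinAt
  have b1 : ∀ x₀, ∃ C, ∀ x ∈ ball x₀ 1, ∀ t ∈ angles, |w1 x t| ≤ C := fun x₀ =>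
    (hb x₀).imp fun C h x hx t ht => (h x hx t ht).1
  have b2 : ∀ x₀, ∃ C, ∀ x ∈ ball x₀ 1, ∀ t ∈ angles, |w2 x t| ≤ C := fun x₀ =>
    (hb x₀).imp fun C h x hx t ht => (h x hx t ht).2.1
  have i0 : ∀ x, IntegrableOn (fun t => w x t * Real.sin (2 * t)) angles := fun x =>
    integrableOn_mul_sin (c0 x) (hM x)
  have i1 : ∀ x, IntegrableOn (fun t => w1 x t * Real.sin (2 * t)) angles := fun x =>
    (hb x).elim fun C h => integrableOn_mul_sin (C := C) (c1 x) fun t ht =>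
      (h x (mem_ball_self one_pos) t ht).1
  have i2 : ∀ x, IntegrableOn (fun t => w2 x t * Real.sin (2 * t)) angles := fun x =>
    (hb x).elim fun C h => integrableOn_mul_sin (C := C) (c2 x) fun t ht =>
      (h x (mem_ball_self one_pos) t ht).2.1
  have itt : ∀ x, IntegrableOn (fun t => wtt x t * Real.sin (2 * t)) angles := fun x =>
    (hb x).elim fun C h => integrableOn_mul_sin (C := C) (ctt x) fun t ht =>
      (h x (mem_ball_self one_pos) t ht).2.2.2
  set F : ℝ → ℝ := fun x => ∫ t in angles, w x t * Real.sin (2 * t) with hFdef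
  set F1 : ℝ → ℝ := fun x => ∫ t in angles, w1 x t * Real.sin (2 * t) with hF1def
  set F2 : ℝ → ℝ := fun x => ∫ t in angles, w2 x t * Real.sin (2 * t) with hF2def
  have hF : ∀ x, HasDerivAt F (F1 x) x := fun x =>
    hasDerivAt_integral_mul_sin c0 c1 h1 (fun x₀ => ⟨M, fun x _ => hM x⟩) b1 x
  have hF1 : ∀ x, HasDerivAt F1 (F2 x) x := fun x =>
    hasDerivAt_integral_mul_sin c1 c2 h2 b1 b2 x
  have hparts : ∀ x, ∫ t in angles, wtt x t * Real.sin (2 * t) = -4 * F x := by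
    intro x
    obtain ⟨C, hC⟩ := hb x
    have hx := mem_ball_self (x := x) one_pos
    exact integral_second_deriv_mul_sin (C := max C M) (ht x) (htt x) (ctt x)
      (fun t h => (hM x t h).trans (le_max_right _ _))
      (fun t h => (hC x hx t h).2.2.1.trans (le_max_left _ _))
      (fun t h => (hC x hx t h).2.2.2.trans (le_max_left _ _)) (l0 x) (l1 x)
  -- `D` is the Laplacian of `u - |x|²/2` and `B` its second derivative along the circle.
  set D : ℝ → ℝ → ℝ := fun x t => 4 * w x t + 4 * w1 x t + w2 x t + wtt x t with hDdef
  set B : ℝ → ℝ → ℝ := fun x t => 2 * w x t + w1 x t + wtt x t with hBdef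
  have hBD : ∀ x, ∀ t ∈ angles, B x t ^ 2 ≤ D x t * (1 + B x t) := by
    intro x t h
    have := hdet x t h
    simp only [hBdef, hDdef]
    nlinarith
  have hBpos : ∀ x, ∀ t ∈ angles, 0 < 1 + B x t := hpos
  have hDnn : ∀ x, ∀ t ∈ angles, 0 ≤ D x t := by
    intro x t h
    by_contra! hn
    have := hBD x t h
    nlinarith [hBpos x t h, sq_nonneg (B x t), mul_neg_of_neg_of_pos hn (hBpos x t h)]
  have iD : ∀ x, IntegrableOn (fun t => D x t * Real.sin (2 * t)) angles := by
    intro x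
    refine (((((i0 x).const_mul 4).add ((i1 x).const_mul 4)).add (i2 x)).add (itt x)).congr ?_
    exact Eventually.of_forall fun t => by simp only [hDdef, Pi.add_apply]; ring
  have hDint : ∀ x, ∫ t in angles, D x t * Real.sin (2 * t) = F2 x + 4 * F1 x := by
    intro x
    have e : ∀ t, D x t * Real.sin (2 * t) = 4 * (w x t * Real.sin (2 * t)) +
        4 * (w1 x t * Real.sin (2 * t)) + w2 x t * Real.sin (2 * t) +
        wtt x t * Real.sin (2 * t) := fun t => by simp only [hDdef]; ring
    simp only [e]
    have j1 : IntegrableOn (fun t => 4 * (w x t * Real.sin (2 * t)) +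
        4 * (w1 x t * Real.sin (2 * t))) angles := ((i0 x).const_mul 4).add ((i1 x).const_mul 4)
    have j2 : IntegrableOn (fun t => 4 * (w x t * Real.sin (2 * t)) +
        4 * (w1 x t * Real.sin (2 * t)) + w2 x t * Real.sin (2 * t)) angles := j1.add (i2 x)
    rw [integral_add j2 (itt x), integral_add j1 (i2 x),
      integral_add ((i0 x).const_mul 4) ((i1 x).const_mul 4), integral_const_mul,
      integral_const_mul, hparts x]
    ring
  have iB : ∀ x, IntegrableOn (fun t => B x t * Real.sin (2 * t)) angles := by
    intro x
    refine ((((i0 x).const_mul 2).add (i1 x)).add (itt x)).congr ?_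
    exact Eventually.of_forall fun t => by simp only [hBdef, Pi.add_apply]; ring
  have hBint : ∀ x, ∫ t in angles, B x t * Real.sin (2 * t) = F1 x - 2 * F x := by
    intro x
    have e : ∀ t, B x t * Real.sin (2 * t) = 2 * (w x t * Real.sin (2 * t)) +
        w1 x t * Real.sin (2 * t) + wtt x t * Real.sin (2 * t) := fun t => by
      simp only [hBdef]; ring
    simp only [e]
    have j : IntegrableOn (fun t => 2 * (w x t * Real.sin (2 * t)) +
        w1 x t * Real.sin (2 * t)) angles := ((i0 x).const_mul 2).add (i1 x)
    rw [integral_add j (itt x),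
      integral_add ((i0 x).const_mul 2) (i1 x), integral_const_mul, hparts x]
    ring
  have isin : IntegrableOn (fun t => Real.sin (2 * t)) angles := by
    have := integrableOn_mul_sin (f := fun _ => 1) (C := 1) continuousOn_const (by simp)
    simpa using this
  have hFM : ∀ x, |F x| ≤ M := by
    intro x
    have e1 : F x ≤ ∫ t in angles, M * Real.sin (2 * t) :=
      setIntegral_mono_on (i0 x) (isin.const_mul M) measurableSet_Ioo fun t h =>
        mul_le_mul_of_nonneg_right (abs_le.1 (hM x t h)).2 (sin_two_mul_pos h).le
    have e2 : ∫ t in angles, (-M) * Real.sin (2 * t) ≤ F x :=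
      setIntegral_mono_on (isin.const_mul (-M)) (i0 x) measurableSet_Ioo fun t h =>
        mul_le_mul_of_nonneg_right (abs_le.1 (hM x t h)).1 (sin_two_mul_pos h).le
    rw [integral_const_mul, integral_sin_two_mul, mul_one] at e1 e2
    exact abs_le.2 ⟨e2, e1⟩
  have hg : ∀ x, 0 ≤ F2 x + 4 * F1 x := by
    intro x
    rw [← hDint x]
    exact setIntegral_nonneg measurableSet_Ioo fun t h =>
      mul_nonneg (hDnn x t h) (sin_two_mul_pos h).le
  have hε : ∀ ε > 0, ∃ C ≥ 0, ∀ x, |F1 x - 2 * F x| ≤ C * (F2 x + 4 * F1 x) + ε := by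
    intro ε hεpos
    refine ⟨1 + 1 / ε, by positivity, fun x => ?_⟩
    -- `B² ≤ D (1 + B)` gives `|B| ≤ D + √D`, and `√D ≤ D / ε + ε`.
    have hpt : ∀ t ∈ angles, |B x t| ≤ (1 + 1 / ε) * D x t + ε := by
      intro t h
      have hs := hBD x t h
      have hD := hDnn x t h
      have hq : D x t = ε * (D x t / ε) := by field_simp
      have hqn : 0 ≤ D x t / ε := by positivity
      have e3 : (1 + 1 / ε) * D x t + ε = D x t + D x t / ε + ε := by ring
      rw [e3]
      refine abs_le_of_sq_le_sq' ?_ (by positivity) |> abs_le.2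
      by_contra! hlt
      have hB' := sq_nonneg (B x t)
      set d := D x t
      set b := B x t
      set e := d / ε
      rcases le_or_gt b 0 with hb0 | hb0
      · nlinarith [mul_nonneg hD hqn, mul_nonneg hD hεpos.le, mul_nonneg hqn hεpos.le]
      · have : d + e + ε < b := by nlinarith
        nlinarith [mul_nonneg hD hqn, mul_nonneg hD hεpos.le, mul_nonneg hqn hεpos.le]
    have isum : IntegrableOn (fun t => (1 + 1 / ε) * (D x t * Real.sin (2 * t)) +
        ε * Real.sin (2 * t)) angles := ((iD x).const_mul _).add (isin.const_mul ε)
    have esum : ∫ t in angles, ((1 + 1 / ε) * (D x t * Real.sin (2 * t)) +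
        ε * Real.sin (2 * t)) = (1 + 1 / ε) * (F2 x + 4 * F1 x) + ε := by
      rw [integral_add ((iD x).const_mul _) (isin.const_mul ε), integral_const_mul,
        integral_const_mul, hDint x, integral_sin_two_mul, mul_one]
    have e1 : ∫ t in angles, B x t * Real.sin (2 * t) ≤ _ :=
      setIntegral_mono_on (iB x) isum measurableSet_Ioo fun t h => by
        have := mul_le_mul_of_nonneg_right (abs_le.1 (hpt t h)).2 (sin_two_mul_pos h).le
        linarith
    have e2 : ∫ t in angles, -(B x t * Real.sin (2 * t)) ≤ _ :=
      setIntegral_mono_on (iB x).neg isum measurableSet_Ioo fun t h => by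
        have := mul_le_mul_of_nonneg_right (abs_le.1 (hpt t h)).1 (sin_two_mul_pos h).le
        linarith
    rw [esum, hBint x] at e1
    rw [esum, integral_neg, hBint x] at e2
    exact abs_le.2 ⟨by linarith, e1⟩
  have hF0 := ode_liouville hF hF1 hFM hg hε
  have hF10 : ∀ x, F1 x = 0 := by
    intro x
    have e : F = fun _ => 0 := funext hF0
    have := hF x
    rw [e] at this
    exact this.unique (hasDerivAt_const x 0)
  have hF20 : ∀ x, F2 x = 0 := by
    intro x
    have e : F1 = fun _ => 0 := funext hF10
    have := hF1 x
    rw [e] at this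
    exact this.unique (hasDerivAt_const x 0)
  have hD0 : ∀ x, ∀ t ∈ angles, D x t = 0 := by
    intro x t h
    have hz : ∫ t in angles, D x t * Real.sin (2 * t) = 0 := by
      rw [hDint, hF10, hF20]; ring
    rw [setIntegral_eq_zero_iff_of_nonneg_ae
      ((ae_restrict_mem measurableSet_Ioo).mono fun t h =>
        mul_nonneg (hDnn x t h) (sin_two_mul_pos h).le) (iD x)] at hz
    have hcont : ContinuousOn (fun t => D x t * Real.sin (2 * t)) angles := by
      have := c0 x; have := c1 x; have := c2 x; have := ctt x
      simp only [hDdef]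
      fun_prop
    have := Measure.eqOn_open_of_ae_eq hz isOpen_Ioo hcont continuousOn_const h
    simpa [(sin_two_mul_pos h).ne'] using this
  intro x t h
  refine euler_ode_bounded (w := fun y => w y t) (fun y => h1 y t h) (fun y => h2 y t h)
    (fun y => hM y t h) (fun y => ?_) x
  have hD := hD0 y t h
  have hB := hBD y t h
  rw [hD, zero_mul] at hB
  have hB0 : B y t = 0 := by nlinarith
  simp only [hDdef] at hD
  simp only [hBdef] at hB0
  linarith

/-! ### The quadrant in polar coordinates -/

open Real in
/-- The point with polar coordinates `(exp x, t)`. -/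
def polarPt (x t : ℝ) : E2 := !₂[exp x * cos t, exp x * sin t]

theorem isOpen_Qset : IsOpen Qset := by
  apply IsOpen.inter
  · exact isOpen_lt continuous_const (EuclideanSpace.proj (0 : Fin 2) : E2 →L[ℝ] ℝ).continuous
  · exact isOpen_lt continuous_const (EuclideanSpace.proj (1 : Fin 2) : E2 →L[ℝ] ℝ).continuous

theorem mem_closure_Qset {x : E2} : x ∈ closure Qset ↔ 0 ≤ x 0 ∧ 0 ≤ x 1 := by
  constructor
  · intro hx
    have hc : IsClosed {x : E2 | 0 ≤ x 0 ∧ 0 ≤ x 1} :=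
      (isClosed_le continuous_const (EuclideanSpace.proj (0 : Fin 2) : E2 →L[ℝ] ℝ).continuous).inter
        (isClosed_le continuous_const (EuclideanSpace.proj (1 : Fin 2) : E2 →L[ℝ] ℝ).continuous)
    have hsub : Qset ⊆ {x : E2 | 0 ≤ x 0 ∧ 0 ≤ x 1} := fun y hy => ⟨hy.1.le, hy.2.le⟩
    exact closure_minimal hsub hc hx
  · rintro ⟨h0, h1⟩
    have ht : Tendsto (fun s : ℝ => x + s • (!₂[1, 1] : E2)) (𝓝[>] 0) (𝓝 x) := by
      have : Continuous fun s : ℝ => x + s • (!₂[1, 1] : E2) := by fun_prop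
      have h := this.tendsto 0
      simp only [zero_smul, add_zero] at h
      exact h.mono_left nhdsWithin_le_nhds
    refine mem_closure_of_tendsto ht ?_
    filter_upwards [self_mem_nhdsWithin] with s hs
    have hs : 0 < s := hs
    constructor
    · simp; linarith
    · simp; linarith

theorem mem_frontier_Qset {x : E2} (hx : x ∈ closure Qset) (h : x ∉ Qset) : x ∈ frontier Qset := by
  rw [frontier, isOpen_Qset.interior_eq]
  exact ⟨hx, h⟩

theorem qfun_eq (x : E2) : qfun x = (x 0 ^ 2 + x 1 ^ 2) / 2 := by
  rw [qfun, EuclideanSpace.real_norm_sq_eq, Fin.sum_univ_two]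

/-- The chain rule along a plane curve `(a, b)`. -/
theorem hasDerivAt_comp_plane {f : E2 → ℝ} {a b : ℝ → ℝ} {a' b' t : ℝ}
    (hf : DifferentiableAt ℝ f !₂[a t, b t]) (ha : HasDerivAt a a' t) (hb : HasDerivAt b b' t) :
    HasDerivAt (fun s => f !₂[a s, b s])
      (a' * pd 0 f !₂[a t, b t] + b' * pd 1 f !₂[a t, b t]) t := by
  have e : ∀ p q : ℝ, (!₂[p, q] : E2) =
      p • EuclideanSpace.single 0 1 + q • EuclideanSpace.single 1 1 := by
    intro p q
    ext i
    fin_cases i <;> simp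
  have hγ : HasDerivAt (fun s => (!₂[a s, b s] : E2))
      (a' • EuclideanSpace.single 0 1 + b' • EuclideanSpace.single 1 1) t := by
    simp only [e]
    exact (ha.smul_const _).add (hb.smul_const _)
  refine (hf.hasFDerivAt.comp_hasDerivAt t hγ).congr_deriv ?_
  simp [pd]

theorem polarPt_mem {x t : ℝ} (ht : t ∈ angles) : polarPt x t ∈ Qset :=
  ⟨by simpa [polarPt] using
      mul_pos (Real.exp_pos x) (Real.cos_pos_of_mem_Ioo ⟨by linarith [ht.1, Real.pi_pos], ht.2⟩),
    by simpa [polarPt] using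
      mul_pos (Real.exp_pos x) (Real.sin_pos_of_pos_of_lt_pi ht.1 (by linarith [ht.2, Real.pi_pos]))⟩

theorem polarPt_mem_closure {x t : ℝ} (ht : t ∈ Icc 0 (Real.pi / 2)) :
    polarPt x t ∈ closure Qset \ {0} := by
  have hc : 0 ≤ Real.cos t := Real.cos_nonneg_of_mem_Icc ⟨by linarith [ht.1, Real.pi_pos], ht.2⟩
  have hs : 0 ≤ Real.sin t := Real.sin_nonneg_of_nonneg_of_le_pi ht.1 (by linarith [ht.2, Real.pi_pos])
  have hx := Real.exp_pos x
  have hmem : polarPt x t ∈ closure Qset :=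
    mem_closure_Qset.2 ⟨by simpa [polarPt] using mul_nonneg hx.le hc,
      by simpa [polarPt] using mul_nonneg hx.le hs⟩
  refine ⟨hmem, fun h => ?_⟩
  have h : polarPt x t = 0 := h
  have h0 : Real.exp x * Real.cos t = 0 := by simpa [polarPt] using congrArg (fun y : E2 => y 0) h
  have h1 : Real.exp x * Real.sin t = 0 := by simpa [polarPt] using congrArg (fun y : E2 => y 1) h
  have h0 := (mul_eq_zero.1 h0).resolve_left hx.ne'
  have h1 := (mul_eq_zero.1 h1).resolve_left hx.ne'
  have := Real.sin_sq_add_cos_sq t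
  rw [h0, h1] at this
  norm_num at this

theorem exists_polarPt {x : E2} (hx : x ∈ Qset) : ∃ r, ∃ t ∈ angles, polarPt r t = x := by
  obtain ⟨h0, h1⟩ : 0 < x 0 ∧ 0 < x 1 := hx
  have hsq : ‖x‖ ^ 2 = x 0 ^ 2 + x 1 ^ 2 := by
    rw [EuclideanSpace.real_norm_sq_eq, Fin.sum_univ_two]
  have hpos : 0 < ‖x‖ := norm_pos_iff.2 fun h => by simp [h] at h0
  have hlt : x 1 / ‖x‖ < 1 := by
    rw [div_lt_one hpos]
    nlinarith [sq_nonneg (x 1 - ‖x‖)]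
  refine ⟨Real.log ‖x‖, Real.arcsin (x 1 / ‖x‖),
    ⟨Real.arcsin_pos.2 (by positivity), Real.arcsin_lt_pi_div_two.2 hlt⟩, ?_⟩
  have hcos : Real.sqrt (1 - (x 1 / ‖x‖) ^ 2) = x 0 / ‖x‖ := by
    rw [show 1 - (x 1 / ‖x‖) ^ 2 = (x 0 / ‖x‖) ^ 2 by
      field_simp; linarith]
    exact Real.sqrt_sq (by positivity)
  have hneg : -1 ≤ x 1 / ‖x‖ := by
    have : 0 < x 1 / ‖x‖ := by positivity
    linarith
  ext i
  fin_cases i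
  · simp [polarPt, Real.cos_arcsin, hcos, Real.exp_log hpos, mul_div_cancel₀, hpos.ne']
  · simp [polarPt, Real.sin_arcsin hneg hlt.le, Real.exp_log hpos, mul_div_cancel₀, hpos.ne']

/-! ### Global solutions -/

/-- Convexity along the segment through `x` that joins the points `(s, 0)` and `(0, s)`, where
`s = x₁ + x₂`; at both of them `u = s²/2`. -/
theorem le_of_isGlobalSolution {u : E2 → ℝ} (hu : IsGlobalSolution 1 u) {x : E2} (hx : x ∈ Qset) :
    u x ≤ (x 0 + x 1) ^ 2 / 2 := by
  obtain ⟨h0, h1⟩ := hx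
  set s := x 0 + x 1 with hs
  have hspos : 0 < s := by positivity
  have m0 : (!₂[s, 0] : E2) ∈ closure Qset := mem_closure_Qset.2 (by simp [hspos.le])
  have m1 : (!₂[0, s] : E2) ∈ closure Qset := mem_closure_Qset.2 (by simp [hspos.le])
  have b0 : u !₂[s, 0] = s ^ 2 / 2 := by
    rw [hu.bdry _ (mem_frontier_Qset m0 (by simp [Qset])), qfun_eq]; simp
  have b1 : u !₂[0, s] = s ^ 2 / 2 := by
    rw [hu.bdry _ (mem_frontier_Qset m1 (by simp [Qset])), qfun_eq]; simp
  have hsum : x 0 / s + x 1 / s = 1 := by rw [← add_div, ← hs, div_self hspos.ne']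
  have h := hu.conv.2 m0 m1 (div_nonneg h0.le hspos.le)
    (div_nonneg h1.le hspos.le) hsum
  have e : (x 0 / s) • (!₂[s, 0] : E2) + (x 1 / s) • (!₂[0, s] : E2) = x := by
    ext i
    fin_cases i <;> simp [hspos.ne']
  rw [e, b0, b1, smul_eq_mul, smul_eq_mul, ← add_mul, hsum, one_mul] at h
  exact h

theorem pd2_nonneg {u : E2 → ℝ} (hu : IsGlobalSolution 1 u) {x : E2} (hx : x ∈ Qset) :
    0 ≤ pd2 0 0 u x := by
  have hsm : ∀ y ∈ Qset, ContDiffAt ℝ 2 u y := fun y hy =>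
    (hu.smooth.contDiffAt (isOpen_Qset.mem_nhds hy)).of_le
      (WithTop.coe_le_coe.2 (le_top : (2 : ℕ∞) ≤ ⊤))
  have hmem : ∀ s ∈ Ioi (0 : ℝ), (!₂[s, x 1] : E2) ∈ Qset := fun s hs =>
    ⟨by simpa using hs, by simpa using hx.2⟩
  have ex : (!₂[x 0, x 1] : E2) = x := by ext i; fin_cases i <;> simp
  have hd1 : ∀ s ∈ Ioi (0 : ℝ), HasDerivAt (fun s => u !₂[s, x 1]) (pd 0 u !₂[s, x 1]) s := by
    intro s hs
    have := hasDerivAt_comp_plane (a := fun s => s) (b := fun _ => x 1)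
      ((hsm _ (hmem s hs)).differentiableAt (by simp)) (hasDerivAt_id s) (hasDerivAt_const s _)
    simpa using this
  have hpd : DifferentiableAt ℝ (pd 0 u) !₂[x 0, x 1] := by
    rw [ex]
    exact (((hsm x hx).fderiv_right (m := 1) (by norm_num)).differentiableAt
      (by simp)).clm_apply (differentiableAt_const _)
  have hd2 : HasDerivAt (fun s => pd 0 u !₂[s, x 1]) (pd2 0 0 u x) (x 0) := by
    have := hasDerivAt_comp_plane (a := fun s => s) (b := fun _ => x 1) hpd
      (hasDerivAt_id _) (hasDerivAt_const _ _)
    rw [ex] at this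
    simpa [pd2] using this
  have hconv : ConvexOn ℝ (Ioi (0 : ℝ)) fun s => u !₂[s, x 1] := by
    refine ⟨convex_Ioi 0, fun s hs t ht a b ha hb hab => ?_⟩
    have h := hu.conv.2 (subset_closure (hmem s hs)) (subset_closure (hmem t ht)) ha hb hab
    have e : a • (!₂[s, x 1] : E2) + b • (!₂[t, x 1] : E2) = !₂[a • s + b • t, x 1] := by
      ext i
      fin_cases i
      · simp
      · simp [← add_mul, hab]
    rwa [e] at h
  have hmono : MonotoneOn (fun s => pd 0 u !₂[s, x 1]) (Ioi 0) := by
    refine (hconv.monotoneOn_deriv fun s hs => (hd1 s hs).differentiableAt).congr fun s hs => ?_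
    exact (hd1 s hs).deriv
  have h := hmono.derivWithin_nonneg (x := x 0)
  rwa [derivWithin_of_isOpen isOpen_Ioi hx.1, hd2.deriv] at h

theorem pd2_comm {u : E2 → ℝ} (hu : IsGlobalSolution 1 u) {x : E2} (hx : x ∈ Qset) :
    pd2 1 0 u x = pd2 0 1 u x := by
  have hsm : ContDiffAt ℝ 2 u x :=
    (hu.smooth.contDiffAt (isOpen_Qset.mem_nhds hx)).of_le
      (WithTop.coe_le_coe.2 (le_top : (2 : ℕ∞) ≤ ⊤))
  have hd : DifferentiableAt ℝ (fderiv ℝ u) x :=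
    (hsm.fderiv_right (m := 1) (by norm_num)).differentiableAt (by simp)
  have hsymm : IsSymmSndFDerivAt ℝ u x := hsm.isSymmSndFDerivAt (by simp)
  have e : ∀ i j, pd2 i j u x =
      fderiv ℝ (fderiv ℝ u) x (EuclideanSpace.single i 1) (EuclideanSpace.single j 1) := by
    intro i j
    have e1 : pd j u = fun y => fderiv ℝ u y (EuclideanSpace.single j 1) := rfl
    rw [pd2, pd, e1, fderiv_clm_apply hd (differentiableAt_const _)]
    simp
  rw [e, e, hsymm.eq]

open Real in
theorem hasDerivAt_polar_radius {f : E2 → ℝ} {r t : ℝ} (hf : DifferentiableAt ℝ f (polarPt r t)) :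
    HasDerivAt (fun y => f (polarPt y t)) (exp r * cos t * pd 0 f (polarPt r t) +
      exp r * sin t * pd 1 f (polarPt r t)) r :=
  hasDerivAt_comp_plane (a := fun y => exp y * cos t) (b := fun y => exp y * sin t) hf
    ((hasDerivAt_exp r).mul_const _) ((hasDerivAt_exp r).mul_const _)

open Real in
theorem hasDerivAt_polar_angle {f : E2 → ℝ} {r t : ℝ} (hf : DifferentiableAt ℝ f (polarPt r t)) :
    HasDerivAt (fun s => f (polarPt r s)) (-(exp r * sin t) * pd 0 f (polarPt r t) +
      exp r * cos t * pd 1 f (polarPt r t)) t := by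
  have := hasDerivAt_comp_plane (a := fun s => exp r * cos s) (b := fun s => exp r * sin s) hf
    ((hasDerivAt_cos t).const_mul _) ((hasDerivAt_sin t).const_mul _)
  rwa [mul_neg] at this

/-- The closed strip of polar coordinates `(r, t)` of the points of `closure Qset \ {0}`. -/
abbrev strip : Set (ℝ × ℝ) := univ ×ˢ Icc 0 (Real.pi / 2)

theorem continuous_polarPt : Continuous fun p : ℝ × ℝ => polarPt p.1 p.2 := by
  unfold polarPt
  fun_prop

theorem continuousOn_polar {f : E2 → ℝ} (hf : ContinuousOn f (closure Qset \ {0})) :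
    ContinuousOn (fun p : ℝ × ℝ => f (polarPt p.1 p.2)) strip :=
  hf.comp continuous_polarPt.continuousOn fun _ hp => polarPt_mem_closure hp.2

theorem exists_local_bound {f : ℝ × ℝ → ℝ} (hf : ContinuousOn f strip) (x₀ : ℝ) :
    ∃ C, ∀ x ∈ ball x₀ 1, ∀ t ∈ angles, |f (x, t)| ≤ C := by
  have hK : IsCompact (Icc (x₀ - 1) (x₀ + 1) ×ˢ Icc 0 (Real.pi / 2)) :=
    isCompact_Icc.prod isCompact_Icc
  obtain ⟨C, hC⟩ := hK.exists_bound_of_continuousOn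
    (hf.mono (prod_mono (subset_univ _) subset_rfl))
  refine ⟨C, fun x hx t ht => hC (x, t) ⟨?_, Ioo_subset_Icc_self ht⟩⟩
  rw [Real.ball_eq_Ioo] at hx
  exact Ioo_subset_Icc_self hx

theorem continuousOn_slice {f : ℝ × ℝ → ℝ} (hf : ContinuousOn f strip) (x : ℝ) :
    ContinuousOn (fun t => f (x, t)) (Icc 0 (Real.pi / 2)) :=
  hf.comp (by fun_prop) fun _ ht => ⟨mem_univ _, ht⟩

open Real in
/-- The function `w` of `polar_liouville`, computed from a global solution, vanishes. Its derivatives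
are written through the continuous extensions `g i`, `h i j` of the partial derivatives of `u`, so
that they are defined and continuous up to the sides of the strip. -/
theorem polar_eq_zero {u : E2 → ℝ} (hu : IsGlobalSolution 1 u) :
    ∀ r, ∀ t ∈ angles, exp (-2 * r) * u (polarPt r t) - 1 / 2 = 0 := by
  have hsm : ∀ y ∈ Qset, ContDiffAt ℝ 2 u y := fun y hy =>
    (hu.smooth.contDiffAt (isOpen_Qset.mem_nhds hy)).of_le
      (WithTop.coe_le_coe.2 (le_top : (2 : ℕ∞) ≤ ⊤))
  choose g hgc hg using hu.ext1
  choose h hhc hh using hu.ext2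
  have hdu : ∀ y ∈ Qset, DifferentiableAt ℝ u y := fun y hy =>
    (hsm y hy).differentiableAt (by simp)
  have hdpd : ∀ i, ∀ y ∈ Qset, DifferentiableAt ℝ (pd i u) y := fun i y hy =>
    (((hsm y hy).fderiv_right (m := 1) (by norm_num)).differentiableAt
      (by simp)).clm_apply (differentiableAt_const _)
  have hev : ∀ i, ∀ y ∈ Qset, g i =ᶠ[𝓝 y] pd i u := fun i y hy => by
    filter_upwards [isOpen_Qset.mem_nhds hy] with z hz using hg i z hz
  have hdg : ∀ i, ∀ y ∈ Qset, DifferentiableAt ℝ (g i) y := fun i y hy =>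
    (hdpd i y hy).congr_of_eventuallyEq (hev i y hy)
  have hpg : ∀ i j, ∀ y ∈ Qset, pd i (g j) y = h i j y := fun i j y hy => by
    rw [hh i j y hy, pd2, pd, pd, (hev j y hy).fderiv_eq]
  -- First derivatives of `u` and of `g i` in the radial (`r`) and the angular (`t`) direction.
  have ur : ∀ r, ∀ t ∈ angles, HasDerivAt (fun y => u (polarPt y t))
      (exp r * cos t * g 0 (polarPt r t) + exp r * sin t * g 1 (polarPt r t)) r := fun r t ht => by
    have hm := polarPt_mem (x := r) ht
    rw [hg 0 _ hm, hg 1 _ hm]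
    exact hasDerivAt_polar_radius (hdu _ hm)
  have ut : ∀ r, ∀ t ∈ angles, HasDerivAt (fun s => u (polarPt r s))
      (-(exp r * sin t) * g 0 (polarPt r t) + exp r * cos t * g 1 (polarPt r t)) t :=
    fun r t ht => by
      have hm := polarPt_mem (x := r) ht
      rw [hg 0 _ hm, hg 1 _ hm]
      exact hasDerivAt_polar_angle (hdu _ hm)
  have gr : ∀ i r, ∀ t ∈ angles, HasDerivAt (fun y => g i (polarPt y t))
      (exp r * cos t * h 0 i (polarPt r t) + exp r * sin t * h 1 i (polarPt r t)) r :=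
    fun i r t ht => by
      have hm := polarPt_mem (x := r) ht
      rw [← hpg 0 i _ hm, ← hpg 1 i _ hm]
      exact hasDerivAt_polar_radius (hdg i _ hm)
  have gt : ∀ i r, ∀ t ∈ angles, HasDerivAt (fun s => g i (polarPt r s))
      (-(exp r * sin t) * h 0 i (polarPt r t) + exp r * cos t * h 1 i (polarPt r t)) t :=
    fun i r t ht => by
      have hm := polarPt_mem (x := r) ht
      rw [← hpg 0 i _ hm, ← hpg 1 i _ hm]
      exact hasDerivAt_polar_angle (hdg i _ hm)
  set w : ℝ → ℝ → ℝ := fun r t => exp (-2 * r) * u (polarPt r t) - 1 / 2 with hw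
  set R : ℝ → ℝ → ℝ := fun r t =>
    exp r * cos t * g 0 (polarPt r t) + exp r * sin t * g 1 (polarPt r t) with hR
  set R2 : ℝ → ℝ → ℝ := fun r t => R r t +
    exp r * cos t * (exp r * cos t * h 0 0 (polarPt r t) + exp r * sin t * h 1 0 (polarPt r t)) +
    exp r * sin t * (exp r * cos t * h 0 1 (polarPt r t) + exp r * sin t * h 1 1 (polarPt r t))
    with hR2
  set w1 : ℝ → ℝ → ℝ := fun r t => exp (-2 * r) * (-2 * u (polarPt r t) + R r t) with hw1
  set w2 : ℝ → ℝ → ℝ := fun r t =>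
    exp (-2 * r) * (4 * u (polarPt r t) - 4 * R r t + R2 r t) with hw2
  set wt : ℝ → ℝ → ℝ := fun r t => exp (-2 * r) *
    (-(exp r * sin t) * g 0 (polarPt r t) + exp r * cos t * g 1 (polarPt r t)) with hwt
  set wtt : ℝ → ℝ → ℝ := fun r t => exp (-2 * r) * (-R r t +
    -(exp r * sin t) *
      (-(exp r * sin t) * h 0 0 (polarPt r t) + exp r * cos t * h 1 0 (polarPt r t)) +
    exp r * cos t *
      (-(exp r * sin t) * h 0 1 (polarPt r t) + exp r * cos t * h 1 1 (polarPt r t))) with hwtt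
  have hexp : ∀ r : ℝ, HasDerivAt (fun r : ℝ => exp (-2 * r)) (-2 * exp (-2 * r)) r := fun r => by
    have h4 : HasDerivAt (fun x : ℝ => -2 * x) (-2) r := by
      simpa using (hasDerivAt_id r).const_mul (-2 : ℝ)
    exact h4.exp.congr_deriv (by ring)
  have hmul : ∀ r : ℝ, exp (-2 * r) * (exp r * exp r) = 1 := fun r => by
    rw [← exp_add, ← exp_add, ← exp_zero]; congr 1; ring
  have cu : ContinuousOn (fun p : ℝ × ℝ => u (polarPt p.1 p.2)) strip :=
    continuousOn_polar (hu.cont.mono sdiff_subset)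
  have cg : ∀ i, ContinuousOn (fun p : ℝ × ℝ => g i (polarPt p.1 p.2)) strip := fun i =>
    continuousOn_polar (hgc i)
  have ch : ∀ i j, ContinuousOn (fun p : ℝ × ℝ => h i j (polarPt p.1 p.2)) strip := fun i j =>
    continuousOn_polar (hhc i j)
  have cE : ContinuousOn (fun p : ℝ × ℝ => exp (-2 * p.1)) strip :=
    Continuous.continuousOn (by fun_prop)
  have cX : ContinuousOn (fun p : ℝ × ℝ => exp p.1 * cos p.2) strip :=
    Continuous.continuousOn (by fun_prop)
  have cY : ContinuousOn (fun p : ℝ × ℝ => exp p.1 * sin p.2) strip :=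
    Continuous.continuousOn (by fun_prop)
  have kw : ContinuousOn (fun p : ℝ × ℝ => w p.1 p.2) strip :=
    (cE.mul cu).sub continuousOn_const
  have kR : ContinuousOn (fun p : ℝ × ℝ => R p.1 p.2) strip :=
    (cX.mul (cg 0)).add (cY.mul (cg 1))
  have kR2 : ContinuousOn (fun p : ℝ × ℝ => R2 p.1 p.2) strip :=
    (kR.add (cX.mul ((cX.mul (ch 0 0)).add (cY.mul (ch 1 0))))).add
      (cY.mul ((cX.mul (ch 0 1)).add (cY.mul (ch 1 1))))
  have kw1 : ContinuousOn (fun p : ℝ × ℝ => w1 p.1 p.2) strip :=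
    cE.mul ((continuousOn_const.mul cu).add kR)
  have kw2 : ContinuousOn (fun p : ℝ × ℝ => w2 p.1 p.2) strip :=
    cE.mul (((continuousOn_const.mul cu).sub (continuousOn_const.mul kR)).add kR2)
  have kwt : ContinuousOn (fun p : ℝ × ℝ => wt p.1 p.2) strip :=
    cE.mul ((cY.neg.mul (cg 0)).add (cX.mul (cg 1)))
  have kwtt : ContinuousOn (fun p : ℝ × ℝ => wtt p.1 p.2) strip :=
    cE.mul ((kR.neg.add (cY.neg.mul ((cY.neg.mul (ch 0 0)).add (cX.mul (ch 1 0))))).add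
      (cX.mul ((cY.neg.mul (ch 0 1)).add (cX.mul (ch 1 1)))))
  have hpi : (0 : ℝ) < π / 2 := by positivity
  have hbd : ∀ r, ∀ t, polarPt r t ∈ closure Qset → polarPt r t ∉ Qset → w r t = 0 := by
    intro r t hm hn
    have h0 : polarPt r t 0 = exp r * cos t := by simp [polarPt]
    have h1 : polarPt r t 1 = exp r * sin t := by simp [polarPt]
    simp only [hw]
    rw [hu.bdry _ (mem_frontier_Qset hm hn), qfun_eq, h0, h1]
    linear_combination (1 / 2) * hmul r +
      (1 / 2) * (exp (-2 * r) * (exp r * exp r)) * sin_sq_add_cos_sq t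
  -- The diagonal entries in the radial-tangential frame, in terms of the Hessian `(A, B; B, D)`.
  have hH : ∀ r, ∀ t ∈ angles, ∃ A B D : ℝ, 0 < A ∧ A * D - B ^ 2 = 1 ∧
      1 + (2 * w r t + 3 * w1 r t + w2 r t) =
        cos t ^ 2 * A + 2 * (cos t * sin t) * B + sin t ^ 2 * D ∧
      1 + (2 * w r t + w1 r t + wtt r t) =
        sin t ^ 2 * A - 2 * (cos t * sin t) * B + cos t ^ 2 * D := by
    intro r t ht
    have hm := polarPt_mem (x := r) ht
    have hma : pd2 0 0 u (polarPt r t) * pd2 1 1 u (polarPt r t)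
        - (pd2 0 1 u (polarPt r t)) ^ 2 = 1 := hu.ma _ hm
    have hA := pd2_nonneg hu hm
    have e10 : h 1 0 (polarPt r t) = h 0 1 (polarPt r t) := by
      rw [hh _ _ _ hm, hh _ _ _ hm, pd2_comm hu hm]
    rw [← hh _ _ _ hm, ← hh _ _ _ hm, ← hh _ _ _ hm] at hma
    rw [← hh _ _ _ hm] at hA
    refine ⟨h 0 0 (polarPt r t), h 0 1 (polarPt r t), h 1 1 (polarPt r t),
      lt_of_le_of_ne hA fun h0 => ?_, hma, ?_, ?_⟩
    · rw [← h0] at hma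
      nlinarith [sq_nonneg (h 0 1 (polarPt r t))]
    · simp only [hw, hw1, hw2, hR2, hR]
      rw [e10]
      linear_combination (cos t ^ 2 * h 0 0 (polarPt r t) +
        2 * (cos t * sin t) * h 0 1 (polarPt r t) + sin t ^ 2 * h 1 1 (polarPt r t)) * hmul r
    · simp only [hw, hw1, hwtt, hR]
      rw [e10]
      linear_combination (sin t ^ 2 * h 0 0 (polarPt r t) -
        2 * (cos t * sin t) * h 0 1 (polarPt r t) + cos t ^ 2 * h 1 1 (polarPt r t)) * hmul r
  have ia : ∀ {f : ℝ → ℝ → ℝ}, ContinuousOn (fun p : ℝ × ℝ => f p.1 p.2) strip →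
      ∀ x, ContinuousOn (f x) angles := fun hf x =>
    (continuousOn_slice hf x).mono Ioo_subset_Icc_self
  refine polar_liouville (w := w) (w1 := w1) (w2 := w2) (wt := wt) (wtt := wtt) (M := 1 / 2)
    ?_ ?_ ?_ ?_ (ia kw1) (ia kw2) (ia kwtt) ?_ ?_ ?_ ?_ ?_ ?_
  · intro r t ht
    refine (((hexp r).mul (ur r t ht)).sub_const (1 / 2)).congr_deriv ?_
    simp only [hw1, hR]
    ring
  · intro r t ht
    have hX : HasDerivAt (fun y : ℝ => exp y * cos t) (exp r * cos t) r :=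
      (hasDerivAt_exp r).mul_const _
    have hY : HasDerivAt (fun y : ℝ => exp y * sin t) (exp r * sin t) r :=
      (hasDerivAt_exp r).mul_const _
    have hRd : HasDerivAt (fun y => R y t) (R2 r t) r :=
      ((hX.mul (gr 0 r t ht)).add (hY.mul (gr 1 r t ht))).congr_deriv (by
        simp only [hR2, hR]; ring)
    refine ((hexp r).mul (((ur r t ht).const_mul (-2)).add hRd)).congr_deriv ?_
    simp only [hw2, Pi.add_apply]
    ring
  · intro r t ht
    exact ((ut r t ht).const_mul (exp (-2 * r))).sub_const (1 / 2)
  · intro r t ht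
    have hX : HasDerivAt (fun s : ℝ => exp r * cos s) (exp r * -sin t) t :=
      (hasDerivAt_cos t).const_mul _
    have hY : HasDerivAt (fun s : ℝ => -(exp r * sin s)) (-(exp r * cos t)) t :=
      ((hasDerivAt_sin t).const_mul _).neg
    refine (((hY.mul (gt 0 r t ht)).add (hX.mul (gt 1 r t ht))).const_mul
      (exp (-2 * r))).congr_deriv ?_
    simp only [hwtt, hR]
    ring
  · intro r t ht
    have hm := polarPt_mem (x := r) ht
    have h0 : polarPt r t 0 = exp r * cos t := by simp [polarPt]
    have h1 : polarPt r t 1 = exp r * sin t := by simp [polarPt]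
    have hle := le_of_isGlobalSolution hu hm
    have hnn := hu.nonneg _ (subset_closure hm)
    rw [h0, h1] at hle
    have he := exp_pos (-2 * r)
    have e1 : exp (-2 * r) * u (polarPt r t) ≤
        exp (-2 * r) * ((exp r * cos t + exp r * sin t) ^ 2 / 2) :=
      mul_le_mul_of_nonneg_left hle he.le
    have e2 : exp (-2 * r) * ((exp r * cos t + exp r * sin t) ^ 2 / 2) =
        (cos t + sin t) ^ 2 / 2 := by
      linear_combination ((cos t + sin t) ^ 2 / 2) * hmul r
    have e3 := mul_nonneg he.le hnn
    have e4 := sin_sq_add_cos_sq t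
    simp only [hw]
    rw [abs_le]
    constructor
    · linarith
    · nlinarith [sq_nonneg (cos t - sin t)]
  · intro r
    obtain ⟨C1, h1⟩ := exists_local_bound kw1 r
    obtain ⟨C2, h2⟩ := exists_local_bound kw2 r
    obtain ⟨C3, h3⟩ := exists_local_bound kwt r
    obtain ⟨C4, h4⟩ := exists_local_bound kwtt r
    refine ⟨max (max C1 C2) (max C3 C4), fun x hx t ht => ⟨?_, ?_, ?_, ?_⟩⟩
    · exact (h1 x hx t ht).trans ((le_max_left _ _).trans (le_max_left _ _))
    · exact (h2 x hx t ht).trans ((le_max_right _ _).trans (le_max_left _ _))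
    · exact (h3 x hx t ht).trans ((le_max_left _ _).trans (le_max_right _ _))
    · exact (h4 x hx t ht).trans ((le_max_right _ _).trans (le_max_right _ _))
  · intro r
    have hmem : (0 : ℝ) ∈ Icc 0 (π / 2) := left_mem_Icc.2 hpi.le
    have hz : w r 0 = 0 := hbd r 0 (polarPt_mem_closure hmem).1 fun hq => by
      have := hq.2
      simp [polarPt] at this
    have hc := (continuousOn_slice kw r) 0 hmem
    rw [ContinuousWithinAt, hz] at hc
    rw [← nhdsWithin_Ioo_eq_nhdsGT hpi]
    exact hc.mono_left (nhdsWithin_mono _ Ioo_subset_Icc_self)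
  · intro r
    have hmem : π / 2 ∈ Icc 0 (π / 2) := right_mem_Icc.2 hpi.le
    have hz : w r (π / 2) = 0 := hbd r _ (polarPt_mem_closure hmem).1 fun hq => by
      have := hq.1
      simp [polarPt] at this
    have hc := (continuousOn_slice kw r) (π / 2) hmem
    rw [ContinuousWithinAt, hz] at hc
    rw [← nhdsWithin_Ioo_eq_nhdsLT hpi]
    exact hc.mono_left (nhdsWithin_mono _ Ioo_subset_Icc_self)
  · intro r t ht
    obtain ⟨A, B, D, -, hdet, e1, e2⟩ := hH r t ht
    rw [e1, e2]
    have hcs := sin_sq_add_cos_sq t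
    -- The last square is the off-diagonal Hessian entry in the rotated frame.
    have e : (cos t ^ 2 * A + 2 * (cos t * sin t) * B + sin t ^ 2 * D) *
        (sin t ^ 2 * A - 2 * (cos t * sin t) * B + cos t ^ 2 * D) =
        (A * D - B ^ 2) * (sin t ^ 2 + cos t ^ 2) ^ 2 +
        (cos t * sin t * (D - A) + (cos t ^ 2 - sin t ^ 2) * B) ^ 2 := by ring
    rw [e, hcs, hdet]
    linarith [sq_nonneg (cos t * sin t * (D - A) + (cos t ^ 2 - sin t ^ 2) * B)]
  · intro r t ht
    obtain ⟨A, B, D, hA, hdet, -, e2⟩ := hH r t ht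
    rw [e2]
    have hc : 0 < cos t := cos_pos_of_mem_Ioo ⟨by linarith [ht.1], ht.2⟩
    refine pos_of_mul_pos_right (a := A) ?_ hA.le
    have e : A * (sin t ^ 2 * A - 2 * (cos t * sin t) * B + cos t ^ 2 * D) =
        (sin t * A - cos t * B) ^ 2 + cos t ^ 2 := by
      linear_combination cos t ^ 2 * hdet
    rw [e]
    positivity

/-- If c = 1, the only global solution is q(x) = |x|²/2. -/
theorem stmt1 (u : E2 → ℝ) (hu : IsGlobalSolution 1 u) :
    ∀ x ∈ closure Qset, u x = ‖x‖ ^ 2 / 2 := by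
  intro x hx
  by_cases hQ : x ∈ Qset
  · obtain ⟨r, t, ht, rfl⟩ := exists_polarPt hQ
    have h := polar_eq_zero hu r t ht
    have hn : ‖polarPt r t‖ ^ 2 = Real.exp r * Real.exp r := by
      rw [EuclideanSpace.real_norm_sq_eq, Fin.sum_univ_two]
      simp only [polarPt, PiLp.toLp_apply, Matrix.cons_val_zero, Matrix.cons_val_one]
      linear_combination Real.exp r ^ 2 * Real.sin_sq_add_cos_sq t
    have hmul : Real.exp (-2 * r) * (Real.exp r * Real.exp r) = 1 := by
      rw [← Real.exp_add, ← Real.exp_add, ← Real.exp_zero]; congr 1; ring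
    rw [hn]
    refine mul_left_cancel₀ (Real.exp_pos (-2 * r)).ne' ?_
    linear_combination h - hmul / 2
  · exact hu.bdry x (mem_frontier_Qset hx hQ)
end
end

section
/- Let U ⊆ ℝ² be open, let u : U → ℝ be four times continuously differentiable, and let F be a twice continuously differentiable real-valued function on the space of real symmetric 2×2 matrices such that F(D²u(x)) = 0 for all x ∈ U and the symmetric matrix (F_{ij}(D²u(x)))_{i,j}, where F_{ij} := ∂F/∂r_{ij}, is positive definite for every x ∈ U. Then, setting w := u₁₂ = ∂₁∂₂u, there exist continuous functions b₁, b₂ : U → ℝ such that Σ_{i,j=1}^{2} F_{ij}(D²u(x)) ∂_i∂_j w(x) + b₁(x) ∂₁w(x) + b₂(x) ∂₂w(x) = 0 for all x ∈ U; that is, w solves a second order linear elliptic equation with no zero order term. -/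
/-!
Write `w = u₁₂` and `a i j = F_{ij}(D²u)`, a `C¹` function on `U`. Differentiating `F(D²u) = 0` in
`x₁` (`sum_Fpartial_mul_pd`) gives `a₁₁ u₁₁₁ + (a₁₂ + a₂₁) w₁ + a₂₂ w₂ = 0`: in two dimensions the
only third derivative here which is not a derivative of `w` is `u₁₁₁`. Ellipticity in the direction
`e₁` says `a₁₁ > 0`, so `u₁₁₁` is a combination of `w₁` and `w₂` with continuous coefficients.
Differentiating the same identity in `x₂` (`sum_pd_mul_add`) gives
`∑ a i j ∂ᵢ∂ⱼ w + ∑ ∂₂(a i j) u_{ij1} = 0`, and substituting for `u₁₁₁` turns the second sum into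
first order terms in `w`. Equality of mixed partial derivatives (`pd_comm`, `pd_rotate`) is used
throughout.
-/

noncomputable section

open Set Metric

/-- The partial derivative F_{ij} = ∂F/∂r_{ij} of a function of 2×2 matrices. -/
def Fpartial (F : (Fin 2 → Fin 2 → ℝ) → ℝ) (i j : Fin 2) (r : Fin 2 → Fin 2 → ℝ) : ℝ :=
  fderiv ℝ F r (Pi.single i (Pi.single j 1))

/-- The Hessian matrix D²u(x). -/
def hessMat (u : E2 → ℝ) (x : E2) : Fin 2 → Fin 2 → ℝ := fun i j => pd2 i j u x

lemma contDiffOn_pd {U : Set E2} (hU : IsOpen U) {f : E2 → ℝ} {m n : WithTop ℕ∞}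
    (hf : ContDiffOn ℝ n f U) (hmn : m + 1 ≤ n) (i : Fin 2) : ContDiffOn ℝ m (pd i f) U :=
  (hf.fderiv_of_isOpen hU hmn).clm_apply contDiffOn_const

lemma pd_congr {U : Set E2} (hU : IsOpen U) {f g : E2 → ℝ} (h : EqOn f g U) (i : Fin 2) :
    EqOn (pd i f) (pd i g) U := by
  intro x hx
  have : f =ᶠ[nhds x] g := Filter.eventuallyEq_of_mem (hU.mem_nhds hx) h
  simp only [pd, this.fderiv_eq]

lemma pd_comm {U : Set E2} (hU : IsOpen U) {f : E2 → ℝ} (hf : ContDiffOn ℝ 2 f U)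
    (i j : Fin 2) : EqOn (pd i (pd j f)) (pd j (pd i f)) U := by
  intro x hx
  have hx2 : ContDiffAt ℝ 2 f x := hf.contDiffAt (hU.mem_nhds hx)
  have hd : DifferentiableAt ℝ (fderiv ℝ f) x :=
    (hx2.fderiv_right (m := 1) (by norm_num)).differentiableAt (by norm_num)
  have key : ∀ k l : Fin 2, pd k (pd l f) x
      = fderiv ℝ (fderiv ℝ f) x (EuclideanSpace.single k 1) (EuclideanSpace.single l 1) := by
    intro k l
    have := hd.hasFDerivAt.clm_apply
      (hasFDerivAt_const (EuclideanSpace.single l (1 : ℝ) : E2) x)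
    change fderiv ℝ (fun y => fderiv ℝ f y (EuclideanSpace.single l 1)) x _ = _
    rw [this.fderiv]
    simp
  rw [key, key]
  exact (hx2.isSymmSndFDerivAt (by simp)).eq _ _

/-- The outermost of three partial derivatives moved innermost; applied twice it moves a pair. -/
lemma pd_rotate {U : Set E2} (hU : IsOpen U) {f : E2 → ℝ} (hf : ContDiffOn ℝ 3 f U)
    (k i j : Fin 2) : EqOn (pd k (pd i (pd j f))) (pd i (pd j (pd k f))) U :=
  (pd_comm hU (contDiffOn_pd hU hf (by norm_num) j) k i).trans
    (pd_congr hU (pd_comm hU (hf.of_le (by norm_num)) k j) i)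

lemma contDiff_Fpartial {F : (Fin 2 → Fin 2 → ℝ) → ℝ} (hF : ContDiff ℝ 2 F) (i j : Fin 2) :
    ContDiff ℝ 1 (Fpartial F i j) :=
  (hF.fderiv_right (m := 1) (by norm_num)).clm_apply contDiff_const

lemma contDiffOn_hessMat {U : Set E2} (hU : IsOpen U) {u : E2 → ℝ} (hu : ContDiffOn ℝ 4 u U) :
    ContDiffOn ℝ 2 (hessMat u) U :=
  contDiffOn_pi.2 fun i => contDiffOn_pi.2 fun j =>
    contDiffOn_pd hU (contDiffOn_pd hU hu (m := 3) (by norm_num) j) (by norm_num) i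

lemma fderiv_eq_sum_Fpartial (F : (Fin 2 → Fin 2 → ℝ) → ℝ) (r v : Fin 2 → Fin 2 → ℝ) :
    fderiv ℝ F r v = ∑ i, ∑ j, Fpartial F i j r * v i j := by
  have hv : v = ∑ i, ∑ j, v i j • (Pi.single i (Pi.single j 1) : Fin 2 → Fin 2 → ℝ) := by
    ext a b
    fin_cases a <;> fin_cases b <;> simp [Fin.sum_univ_two]
  conv_lhs => rw [hv]
  simp only [map_sum, map_smul, smul_eq_mul, Fpartial]
  exact Finset.sum_congr rfl fun i _ => Finset.sum_congr rfl fun j _ => mul_comm _ _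

/-- The equation `F(D²u) = 0` differentiated once, in the direction `e_k`. -/
lemma sum_Fpartial_mul_pd {U : Set E2} (hU : IsOpen U) {u : E2 → ℝ} (hu : ContDiffOn ℝ 4 u U)
    {F : (Fin 2 → Fin 2 → ℝ) → ℝ} (hF : ContDiff ℝ 2 F)
    (hFu : ∀ x ∈ U, F (hessMat u x) = 0) (k : Fin 2) {x : E2} (hx : x ∈ U) :
    ∑ i, ∑ j, Fpartial F i j (hessMat u x) * pd k (pd2 i j u) x = 0 := by
  have hH : DifferentiableAt ℝ (hessMat u) x :=
    ((contDiffOn_hessMat hU hu).contDiffAt (hU.mem_nhds hx)).differentiableAt (by norm_num)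
  have hF' : DifferentiableAt ℝ F (hessMat u x) := hF.differentiable (by norm_num) _
  have h0 : pd k (fun y => F (hessMat u y)) x = 0 := by
    rw [pd_congr hU (g := fun _ => 0) hFu k hx]
    simp [pd]
  have hcomp : fderiv ℝ (fun y => F (hessMat u y)) x
      = (fderiv ℝ F (hessMat u x)).comp (fderiv ℝ (hessMat u) x) := fderiv_comp x hF' hH
  -- The derivative of the matrix-valued map `hessMat u` is taken entry by entry.
  have hij : ∀ i j, fderiv ℝ (hessMat u) x (EuclideanSpace.single k 1) i j
      = pd k (pd2 i j u) x := by
    intro i j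
    have h := hasFDerivAt_pi'.1 (hasFDerivAt_pi'.1 hH.hasFDerivAt i) j
    have h' : HasFDerivAt (pd2 i j u) _ x := h
    rw [pd, h'.fderiv]
    rfl
  rw [pd, hcomp, ContinuousLinearMap.comp_apply, fderiv_eq_sum_Fpartial] at h0
  simpa only [hij] using h0

lemma contDiffOn_coeff {U : Set E2} (hU : IsOpen U) {u : E2 → ℝ} (hu : ContDiffOn ℝ 4 u U)
    {F : (Fin 2 → Fin 2 → ℝ) → ℝ} (hF : ContDiff ℝ 2 F) (i j : Fin 2) :
    ContDiffOn ℝ 1 (fun x => Fpartial F i j (hessMat u x)) U :=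
  (contDiff_Fpartial hF i j).comp_contDiffOn ((contDiffOn_hessMat hU hu).of_le (by norm_num))

/-- The equation `F(D²u) = 0` differentiated twice, in the directions `e_k` and then `e_l`. -/
lemma sum_pd_mul_add {U : Set E2} (hU : IsOpen U) {u : E2 → ℝ} (hu : ContDiffOn ℝ 4 u U)
    {F : (Fin 2 → Fin 2 → ℝ) → ℝ} (hF : ContDiff ℝ 2 F)
    (hFu : ∀ x ∈ U, F (hessMat u x) = 0) (k l : Fin 2) {x : E2} (hx : x ∈ U) :
    ∑ i, ∑ j, (Fpartial F i j (hessMat u x) * pd l (pd k (pd2 i j u)) x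
      + pd l (fun y => Fpartial F i j (hessMat u y)) x * pd k (pd2 i j u) x) = 0 := by
  have h0 : pd l (fun y => ∑ i, ∑ j, Fpartial F i j (hessMat u y) * pd k (pd2 i j u) y) x = 0 := by
    rw [pd_congr hU (g := fun _ => 0) (fun y hy => sum_Fpartial_mul_pd hU hu hF hFu k hy) l hx]
    simp [pd]
  have ha : ∀ i j, DifferentiableAt ℝ (fun y => Fpartial F i j (hessMat u y)) x := fun i j =>
    ((contDiffOn_coeff hU hu hF i j).contDiffAt (hU.mem_nhds hx)).differentiableAt (by norm_num)
  have hp : ∀ i j, DifferentiableAt ℝ (pd k (pd2 i j u)) x := fun i j =>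
    ((contDiffOn_pd hU (m := 1) (contDiffOn_pi.1 (contDiffOn_pi.1 (contDiffOn_hessMat hU hu) i) j)
      (by norm_num) k).contDiffAt (hU.mem_nhds hx)).differentiableAt (by norm_num)
  have hd := HasFDerivAt.fun_sum (u := Finset.univ) fun i _ =>
    HasFDerivAt.fun_sum (u := Finset.univ) fun j _ =>
      (ha i j).hasFDerivAt.mul (hp i j).hasFDerivAt
  have hd' : HasFDerivAt
    (fun y => ∑ i, ∑ j, Fpartial F i j (hessMat u y) * pd k (pd2 i j u) y) _ x := hd
  rw [pd, hd'.fderiv] at h0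
  rw [← h0]
  simp only [sum_apply, add_apply,
    smul_apply, smul_eq_mul, pd]
  exact Finset.sum_congr rfl fun i _ => Finset.sum_congr rfl fun j _ => by ring

/-- In two dimensions, the mixed derivative w = u₁₂ of a solution of a fully nonlinear
elliptic equation F(D²u) = 0 solves a linear elliptic equation with no zero order term. -/
theorem stmt4 (U : Set E2) (hU : IsOpen U) (u : E2 → ℝ) (hu : ContDiffOn ℝ 4 u U)
    (F : (Fin 2 → Fin 2 → ℝ) → ℝ) (hF : ContDiff ℝ 2 F)
    (hFu : ∀ x ∈ U, F (hessMat u x) = 0)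
    (hell : ∀ x ∈ U, ∀ v : Fin 2 → ℝ, v ≠ 0 →
      0 < ∑ i, ∑ j, Fpartial F i j (hessMat u x) * v i * v j) :
    ∃ b₁ b₂ : E2 → ℝ, ContinuousOn b₁ U ∧ ContinuousOn b₂ U ∧
      ∀ x ∈ U,
        (∑ i, ∑ j, Fpartial F i j (hessMat u x) * pd2 i j (pd2 0 1 u) x) +
          b₁ x * pd 0 (pd2 0 1 u) x + b₂ x * pd 1 (pd2 0 1 u) x = 0 := by
  set a : Fin 2 → Fin 2 → E2 → ℝ := fun i j x => Fpartial F i j (hessMat u x) with ha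
  have ha_cont : ∀ i j, ContinuousOn (a i j) U := fun i j =>
    (contDiffOn_coeff hU hu hF i j).continuousOn
  have hda_cont : ∀ i j, ContinuousOn (pd 1 (a i j)) U := fun i j =>
    (contDiffOn_pd hU (m := 0) (contDiffOn_coeff hU hu hF i j) (by norm_num) 1).continuousOn
  have ha_pos : ∀ x ∈ U, 0 < a 0 0 x := by
    intro x hx
    have h := hell x hx (Pi.single 0 1) (by simp)
    simpa [Fin.sum_univ_two, ha] using h
  have ha_ne : ∀ x ∈ U, a 0 0 x ≠ 0 := fun x hx => (ha_pos x hx).ne'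
  refine ⟨fun x => pd 1 (a 0 1) x + pd 1 (a 1 0) x
      - pd 1 (a 0 0) x * ((a 0 1 x + a 1 0 x) / a 0 0 x),
    fun x => pd 1 (a 1 1) x - pd 1 (a 0 0) x * (a 1 1 x / a 0 0 x),
    ((hda_cont 0 1).add (hda_cont 1 0)).sub
      ((hda_cont 0 0).mul (((ha_cont 0 1).add (ha_cont 1 0)).div (ha_cont 0 0) ha_ne)),
    (hda_cont 1 1).sub ((hda_cont 0 0).mul ((ha_cont 1 1).div (ha_cont 0 0) ha_ne)), ?_⟩
  intro x hx
  have hu1 : ∀ j, ContDiffOn ℝ 3 (pd j u) U := fun j => contDiffOn_pd hU hu (by norm_num) j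
  have e10 : pd 0 (pd2 1 0 u) x = pd 0 (pd2 0 1 u) x :=
    pd_congr hU (pd_comm hU (hu.of_le (by norm_num)) 1 0) 0 hx
  have e11 : pd 0 (pd2 1 1 u) x = pd 1 (pd2 0 1 u) x :=
    pd_comm hU ((hu1 1).of_le (by norm_num)) 0 1 hx
  have e4 : ∀ i j, pd 1 (pd 0 (pd2 i j u)) x = pd2 i j (pd2 0 1 u) x := by
    intro i j
    have h1 : pd 1 (pd 0 (pd2 i j u)) x = pd 1 (pd i (pd j (pd 0 u))) x :=
      pd_congr hU (pd_rotate hU (hu.of_le (by norm_num)) 0 i j) 1 hx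
    have h2 : pd 1 (pd i (pd j (pd 0 u))) x = pd i (pd j (pd 1 (pd 0 u))) x :=
      pd_rotate hU (hu1 0) 1 i j hx
    have h3 : pd i (pd j (pd 1 (pd 0 u))) x = pd i (pd j (pd 0 (pd 1 u))) x :=
      pd_congr hU (pd_congr hU (pd_comm hU (hu.of_le (by norm_num)) 1 0) j) i hx
    exact h1.trans (h2.trans h3)
  have first := sum_Fpartial_mul_pd hU hu hF hFu 0 hx
  have second := sum_pd_mul_add hU hu hF hFu 0 1 hx
  have ea : ∀ i j, Fpartial F i j (hessMat u x) = a i j x := fun _ _ => rfl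
  have eda : ∀ i j, pd 1 (fun y => Fpartial F i j (hessMat u y)) x = pd 1 (a i j) x :=
    fun _ _ => rfl
  simp only [Fin.sum_univ_two, e4, e10, e11, ea, eda] at first second ⊢
  have h00 := ha_ne x hx
  -- `u₁₁₁` in terms of the gradient of `w`, by ellipticity.
  have h111 : pd 0 (pd2 0 0 u) x = -((a 0 1 x + a 1 0 x) / a 0 0 x * pd 0 (pd2 0 1 u) x
      + a 1 1 x / a 0 0 x * pd 1 (pd2 0 1 u) x) := by
    field_simp
    linear_combination first
  rw [h111] at second
  linear_combination second
end
end
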